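/- arXiv:1208.4656 — 2 statements merged into one kernel-verified Lean document; each statement's English description precedes it below -/
import Mathlib

section
/- Let r, t be positive integers, Σ an r×t real rectangular diagonal matrix with nonnegative diagonal entries ς₁₁,…,ς_{pp} (p = min(r,t)), Λ a t×t real diagonal matrix with nonnegative diagonal entries, and ε > 0. Define the r×t real rectangular diagonal matrix Δ* with diagonal entries Δ*ⱼⱼ = max{ςⱼⱼ − ε, 0} − ςⱼⱼ for j = 1,…,p. Then ‖Δ*‖₂ ≤ ε, and for every complex r×t matrix Δ with ‖Δ‖₂ ≤ ε one has det[I_r + (Σ+Δ*)Λ(Σ+Δ*)ᴴ] ≤ det[I_r + (Σ+Δ)Λ(Σ+Δ)ᴴ] (both determinants are positive reals, since the matrices are Hermitian positive definite). In particular, the minimum of Δ ↦ det[I_r + (Σ+Δ)Λ(Σ+Δ)ᴴ] over {Δ : ‖Δ‖₂ ≤ ε} is attained at a diagonal matrix. -/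
open Matrix

/-- The spectral norm (ℓ²→ℓ² operator norm, i.e. largest singular value) of a complex matrix. -/
noncomputable def specNorm {m n : ℕ} (A : Matrix (Fin m) (Fin n) ℂ) : ℝ :=
  ‖LinearMap.toContinuousLinearMap (Matrix.toEuclideanLin A)‖

/-- The `j`-th diagonal entry of a rectangular matrix, extended by `0` out of range. -/
noncomputable def diagEntry {r t : ℕ} (S : Matrix (Fin r) (Fin t) ℝ) (j : ℕ) : ℝ :=
  if h : j < r ∧ j < t then S ⟨j, h.1⟩ ⟨j, h.2⟩ else 0


/-- Contraction-type bound, in coordinates. -/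
def CB {m n : Type*} [Fintype m] [Fintype n] (ε : ℝ) (F : Matrix m n ℂ) : Prop :=
  ∀ v : n → ℂ, ∑ i, ‖(F *ᵥ v) i‖ ^ 2 ≤ ε ^ 2 * ∑ j, ‖v j‖ ^ 2

theorem CB.sub {m n m' n' : Type*} [Fintype m] [Fintype n] [Fintype m'] [Fintype n']
    {ε : ℝ} {F : Matrix m n ℂ} (h : CB ε F) (f : m' → m) (hf : f.Injective)
    (g : n' → n) (hg : g.Injective) : CB ε (F.submatrix f g) := by
  classical
  intro v
  have h1 := h (Function.extend g v 0)
  have h2 : ∀ φ : n → ℂ → ℝ, (∀ j, φ j 0 = 0) →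
      ∑ j, φ j (Function.extend g v 0 j) = ∑ j, φ (g j) (v j) := by
    intro φ hφ
    rw [← Finset.sum_subset (Finset.subset_univ (Finset.univ.image g))]
    · rw [Finset.sum_image (fun a _ b _ hab => hg hab)]
      simp [hg.extend_apply]
    · intro x _ hx
      rw [Function.extend_apply']
      · simpa using hφ x
      · simpa using hx
  have h2c : ∀ φ : n → ℂ → ℂ, (∀ j, φ j 0 = 0) →
      ∑ j, φ j (Function.extend g v 0 j) = ∑ j, φ (g j) (v j) := by
    intro φ hφ
    rw [← Finset.sum_subset (Finset.subset_univ (Finset.univ.image g))]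
    · rw [Finset.sum_image (fun a _ b _ hab => hg hab)]
      simp [hg.extend_apply]
    · intro x _ hx
      rw [Function.extend_apply']
      · simpa using hφ x
      · simpa using hx
  have h3 : ∀ i, (F *ᵥ (Function.extend g v 0)) (f i) = (F.submatrix f g *ᵥ v) i := by
    intro i
    exact h2c (fun j x => F (f i) j * x) (by simp)
  have h4 := h2 (fun j x => ‖x‖ ^ 2) (by simp)
  rw [h4] at h1
  refine le_trans ?_ h1
  simp_rw [← h3]
  rw [← Finset.sum_image (s := Finset.univ) (g := f)
    (f := fun i => ‖(F *ᵥ (Function.extend g v 0)) i‖ ^ 2) (fun a _ b _ hab => hf hab)]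
  exact Finset.sum_le_univ_sum_of_nonneg (fun i => by positivity)

theorem mulVec_eq_sum_aux {m n : Type*} [Fintype n] (A : Matrix m n ℂ) (v : n → ℂ) (i : m) :
    (A *ᵥ v) i = ∑ j, A i j * v j := rfl

theorem CB.det_ne {n : Type*} [Fintype n] [DecidableEq n] {ε : ℝ} (hε : 0 < ε)
    {F : Matrix n n ℂ} (h : CB ε F) (s : n → ℂ) (hs : ∀ i, ε < ‖s i‖) :
    (diagonal s + F).det ≠ 0 := by
  intro h0
  obtain ⟨v, hv, hv0⟩ := Matrix.exists_mulVec_eq_zero_iff.mpr h0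
  have h1 : ∀ i, ‖(F *ᵥ v) i‖ = ‖s i‖ * ‖v i‖ := by
    intro i
    have := congrFun hv0 i
    rw [Matrix.add_mulVec, Pi.add_apply, mulVec_diagonal, Pi.zero_apply] at this
    rw [eq_neg_of_add_eq_zero_right this, norm_neg, norm_mul]
  have h2 := h v
  simp_rw [h1] at h2
  rw [Finset.mul_sum] at h2
  refine absurd h2 (not_le.mpr ?_)
  obtain ⟨i, hi⟩ := Function.ne_iff.mp hv
  apply Finset.sum_lt_sum
  · intro j _
    rw [mul_pow]
    have := hs j
    gcongr
  · refine ⟨i, Finset.mem_univ _, ?_⟩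
    rw [mul_pow]
    have := hs i
    have : 0 < ‖v i‖ := norm_pos_iff.mpr hi
    gcongr

theorem det_cons {n : ℕ} (F : Matrix (Fin (n+1)) (Fin (n+1)) ℂ) (s : Fin n → ℂ) (c : ℂ) :
    (diagonal (Fin.cons c s : Fin (n+1) → ℂ) + F).det =
      c * (diagonal s + F.submatrix Fin.succ Fin.succ).det +
      (diagonal (Fin.cons 0 s : Fin (n+1) → ℂ) + F).det := by
  rw [det_succ_row_zero, det_succ_row_zero (diagonal (Fin.cons 0 s : Fin (n+1) → ℂ) + F)]
  have hsub : ∀ (c : ℂ) (j : Fin (n+1)),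
      (diagonal (Fin.cons c s : Fin (n+1) → ℂ) + F).submatrix Fin.succ j.succAbove =
      (diagonal (Fin.cons 0 s : Fin (n+1) → ℂ) + F).submatrix Fin.succ j.succAbove := by
    intro c j
    ext a b
    simp [diagonal_apply]
  have h0 : (diagonal (Fin.cons 0 s : Fin (n+1) → ℂ) + F).submatrix Fin.succ (Fin.succAbove 0) =
      diagonal s + F.submatrix Fin.succ Fin.succ := by
    ext a b
    simp [diagonal_apply]
  simp_rw [hsub c]
  rw [Fin.sum_univ_succ, Fin.sum_univ_succ, h0]
  simp [diagonal_apply, (Fin.succ_ne_zero _).symm]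
  ring

theorem sq_bound_fin {ε : ℝ} (hε : 0 < ε) : ∀ (n : ℕ) (F : Matrix (Fin n) (Fin n) ℂ),
    CB ε F → ∀ s : Fin n → ℝ, (∀ i, ε < s i) →
    ∏ i, (s i - ε) ≤ ‖(diagonal (fun i => (s i : ℂ)) + F).det‖ := by
  intro n
  induction n with
  | zero => intro F _ s _; simp
  | succ n ih =>
    intro F hF s hs
    have hF' := hF.sub Fin.succ (Fin.succ_injective n) Fin.succ (Fin.succ_injective n)
    have ih' := ih _ hF' (fun i => s i.succ) (fun i => hs _)
    have hs' : (fun i => (s i : ℂ)) = (Fin.cons (s 0 : ℂ) (fun i => (s (Fin.succ i) : ℂ))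
        : Fin (n+1) → ℂ) := by
      ext i; refine Fin.cases ?_ (fun i => ?_) i <;> simp
    rw [hs', det_cons, Fin.prod_univ_succ]
    set D := (diagonal (fun i => (s (Fin.succ i) : ℂ)) + F.submatrix Fin.succ Fin.succ).det with hD
    set B := (diagonal (Fin.cons 0 (fun i => (s (Fin.succ i) : ℂ)) : Fin (n+1) → ℂ) + F).det with hB
    have hP : 0 < ∏ i : Fin n, (s i.succ - ε) :=
      Finset.prod_pos (fun i _ => sub_pos.mpr (hs _))
    have hD0 : D ≠ 0 := norm_pos_iff.mp (hP.trans_le ih')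
    have hc : ‖-B / D‖ ≤ ε := by
      by_contra hlt
      push Not at hlt
      refine hF.det_ne hε (Fin.cons (-B / D) (fun i => (s (Fin.succ i) : ℂ))) ?_ ?_
      · intro i
        refine Fin.cases ?_ (fun i => ?_) i
        · simpa using hlt
        · simp only [Fin.cons_succ, Complex.norm_real]
          exact (hs _).trans_le (le_abs_self _)
      · rw [det_cons, ← hD, ← hB]
        field_simp
        ring
    have e : (s 0 : ℂ) * D + B = ((s 0 : ℂ) - (-B / D)) * D := by
      field_simp
      ring
    rw [e, norm_mul]
    have h5 : s 0 - ε ≤ ‖(s 0 : ℂ) - (-B / D)‖ := by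
      have := norm_sub_norm_le (s 0 : ℂ) (-B / D)
      rw [Complex.norm_real] at this
      have := le_abs_self (s 0)
      rw [Real.norm_eq_abs] at *
      linarith
    exact mul_le_mul h5 ih' hP.le (norm_nonneg _)

theorem sq_bound {n : Type*} [Fintype n] [DecidableEq n] {ε : ℝ} (hε : 0 < ε)
    (F : Matrix n n ℂ) (hF : CB ε F) (s : n → ℝ) (hs : ∀ i, ε < s i) :
    ∏ i, (s i - ε) ≤ ‖(diagonal (fun i => (s i : ℂ)) + F).det‖ := by
  let e := (Fintype.equivFin n).symm
  have := sq_bound_fin hε _ (F.submatrix e e) (hF.sub e e.injective e e.injective)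
    (fun i => s (e i)) (fun i => hs _)
  rw [Equiv.prod_comp e (fun i => s i - ε)] at this
  rw [← det_submatrix_equiv_self e]
  convert this using 3
  ext a b
  simp [diagonal_apply]

theorem det_expand {n : Type*} [Fintype n] [DecidableEq n] (d : n → ℂ) (K : Matrix n n ℂ) :
    (1 + diagonal d * K).det =
      ∑ S : Finset n, (∏ i ∈ S, d i) * (K.submatrix (Subtype.val : S → n) Subtype.val).det := by
  rw [add_comm]
  have := (detRowAlternating (n := n) (R := ℂ)).toMultilinearMap.map_add_univ
    (diagonal d * K).row (1 : Matrix n n ℂ).row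
  refine this.trans (Finset.sum_congr rfl fun S _ => ?_)
  refine (det_piecewise_one_eq_submatrix_det (diagonal d * K) S).trans ?_
  have : (diagonal d * K).submatrix (Subtype.val : S → n) (Subtype.val : S → n) =
      diagonal (fun i : S => d i) * K.submatrix (Subtype.val : S → n) (Subtype.val : S → n) := by
    ext a b
    simp [diagonal_mul]
  rw [this, det_mul, det_diagonal, Finset.prod_coe_sort S d]

theorem gram_sub {m n : Type*} [Fintype m] [Fintype n] [DecidableEq n] (M : Matrix m n ℂ)
    (S : Finset n) : (Mᴴ * M).submatrix (Subtype.val : S → n) Subtype.val =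
      (M.submatrix id (Subtype.val : S → n))ᴴ * M.submatrix id (Subtype.val : S → n) := by
  ext a b
  simp [mul_apply]

open scoped ComplexOrder in
theorem one_le_det {m n : Type*} [Fintype m] [Fintype n] [DecidableEq n] (M : Matrix m n ℂ) :
    1 ≤ (1 + Mᴴ * M).det.re := by
  have h := det_expand 1 (Mᴴ * M)
  have e : diagonal (1 : n → ℂ) * (Mᴴ * M) = Mᴴ * M := by
    rw [show diagonal (1 : n → ℂ) = 1 from diagonal_one, one_mul]
  rw [e] at h
  rw [h, Complex.re_sum]
  have h0 : ∀ S ∈ (Finset.univ : Finset (Finset n)), 0 ≤ ((∏ i ∈ S, (1 : n → ℂ) i) *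
      ((Mᴴ * M).submatrix (Subtype.val : S → n) Subtype.val).det).re := by
    intro S _
    rw [gram_sub]
    simp only [Pi.one_apply, Finset.prod_const_one, one_mul]
    exact (Complex.le_def.mp (posSemidef_conjTranspose_mul_self _).det_nonneg).1
  refine le_trans ?_ (Finset.single_le_sum h0 (Finset.mem_univ ∅))
  simp

theorem det_add_gram {m n : Type*} [Fintype m] [Fintype n] [DecidableEq n]
    (G : Matrix n n ℂ) (hG : G.det ≠ 0) (E : Matrix m n ℂ) :
    ‖G.det‖ ^ 2 ≤ (Gᴴ * G + Eᴴ * E).det.re := by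
  have hu : IsUnit G.det := isUnit_iff_ne_zero.mpr hG
  have e : Gᴴ * G + Eᴴ * E = Gᴴ * (1 + (E * G⁻¹)ᴴ * (E * G⁻¹)) * G := by
    have h1 : E * G⁻¹ * G = E := by rw [Matrix.mul_assoc, nonsing_inv_mul _ hu, Matrix.mul_one]
    have h2 : Gᴴ * (E * G⁻¹)ᴴ = Eᴴ := by rw [← conjTranspose_mul, h1]
    rw [Matrix.mul_add, Matrix.add_mul, Matrix.mul_one, ← Matrix.mul_assoc, h2,
      Matrix.mul_assoc Eᴴ, h1]
  rw [e, det_mul, det_mul, det_conjTranspose, mul_right_comm]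
  have : star G.det * G.det = ((‖G.det‖ ^ 2 : ℝ) : ℂ) := by
    rw [Complex.star_def, ← Complex.normSq_eq_conj_mul_self, Complex.normSq_eq_norm_sq]
  rw [this, Complex.re_ofReal_mul]
  exact le_mul_of_one_le_right (by positivity) (one_le_det _)

theorem det_gram_rows {m n : Type*} [Fintype m] [Fintype n] [DecidableEq n] [DecidableEq m]
    (A : Matrix m n ℂ) (e : n → m) (he : e.Injective) (hG : (A.submatrix e id).det ≠ 0) :
    ‖(A.submatrix e id).det‖ ^ 2 ≤ (Aᴴ * A).det.re := by
  let E : Matrix m n ℂ := fun i j => if i ∈ Finset.univ.image e then 0 else A i j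
  have h := det_add_gram (A.submatrix e id) hG E
  convert h using 3
  ext a b
  simp only [mul_apply, Matrix.add_apply, conjTranspose_apply, submatrix_apply, id]
  rw [← Finset.sum_image (s := Finset.univ) (g := e)
    (f := fun i => star (A i a) * A i b) (fun a _ b _ hab => he hab)]
  rw [← Finset.sum_add_sum_compl (Finset.univ.image e)]
  congr 1
  rw [← Finset.sum_subset (Finset.subset_univ (Finset.univ.image e)ᶜ)]
  · refine Finset.sum_congr rfl fun i hi => ?_
    simp only [E, if_neg (Finset.mem_compl.mp hi)]
  · intro i _ hi
    simp only [Finset.mem_compl, not_not] at hi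
    simp only [E, if_pos hi, mul_zero]

theorem specNorm_cb {m n : ℕ} {A : Matrix (Fin m) (Fin n) ℂ} {ε : ℝ} (h : specNorm A ≤ ε) :
    CB ε A := by
  intro v
  have h0 : 0 ≤ ε := (norm_nonneg _).trans h
  have h1 := (LinearMap.toContinuousLinearMap (Matrix.toEuclideanLin A)).le_of_opNorm_le h
    (WithLp.toLp 2 v)
  have h2 := pow_le_pow_left₀ (norm_nonneg _) h1 2
  rw [mul_pow, EuclideanSpace.norm_sq_eq, EuclideanSpace.norm_sq_eq] at h2
  simpa using h2

theorem specNorm_of_cb {m n : ℕ} {A : Matrix (Fin m) (Fin n) ℂ} {ε : ℝ} (h0 : 0 ≤ ε)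
    (h : CB ε A) : specNorm A ≤ ε := by
  refine ContinuousLinearMap.opNorm_le_bound _ h0 fun x => ?_
  refine (pow_le_pow_iff_left₀ (norm_nonneg _) (by positivity) two_ne_zero).mp ?_
  rw [mul_pow, EuclideanSpace.norm_sq_eq, EuclideanSpace.norm_sq_eq]
  simpa using h x.ofLp

open scoped ComplexOrder in
theorem stmt0 (r t : ℕ) (hr : 0 < r) (ht : 0 < t)
    (Sig : Matrix (Fin r) (Fin t) ℝ)
    (hSdiag : ∀ (i : Fin r) (j : Fin t), (i : ℕ) ≠ (j : ℕ) → Sig i j = 0)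
    (hSpos : ∀ j, 0 ≤ diagEntry Sig j)
    (d : Fin t → ℝ) (hd : ∀ i, 0 ≤ d i)
    (ε : ℝ) (hε : 0 < ε) :
    -- Δ* : the rectangular diagonal matrix with entries max{ς_jj − ε, 0} − ς_jj
    let Δstar : Matrix (Fin r) (Fin t) ℂ := fun (i : Fin r) (j : Fin t) =>
      if (i : ℕ) = (j : ℕ) then ((max (Sig i j - ε) 0 - Sig i j : ℝ) : ℂ) else 0
    let SigC : Matrix (Fin r) (Fin t) ℂ := Sig.map Complex.ofReal
    let Λ : Matrix (Fin t) (Fin t) ℂ := Matrix.diagonal fun i => (d i : ℂ)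
    -- ‖Δ*‖₂ ≤ ε, and Δ* minimizes the determinant over the spectral-norm ball
    specNorm Δstar ≤ ε ∧
    ∀ Δ : Matrix (Fin r) (Fin t) ℂ, specNorm Δ ≤ ε →
      0 < ((1 + (SigC + Δ) * Λ * (SigC + Δ)ᴴ).det).re ∧
      ((1 + (SigC + Δ) * Λ * (SigC + Δ)ᴴ).det).im = 0 ∧
      ((1 + (SigC + Δstar) * Λ * (SigC + Δstar)ᴴ).det).re ≤
        ((1 + (SigC + Δ) * Λ * (SigC + Δ)ᴴ).det).re := by
  intro Δstar SigC Λ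
  have hnn : ∀ (i : Fin r) (j : Fin t), (i : ℕ) = j → Sig i j = diagEntry Sig j := by
    intro i j hij
    have h : (j : ℕ) < r ∧ (j : ℕ) < t := ⟨hij ▸ i.2, j.2⟩
    rw [diagEntry, dif_pos h]
    congr 1
    exact Fin.ext hij
  have hcb : CB ε Δstar := by
    intro v
    have key : ∀ i : Fin r, ‖(Δstar *ᵥ v) i‖ ^ 2 ≤
        ∑ j : Fin t, if (i : ℕ) = j then ε ^ 2 * ‖v j‖ ^ 2 else 0 := by
      intro i
      by_cases hi : (i : ℕ) < t
      · have e1 : (Δstar *ᵥ v) i = Δstar i ⟨i, hi⟩ * v ⟨i, hi⟩ := by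
          rw [mulVec_eq_sum_aux]
          refine Finset.sum_eq_single (M := ℂ) (⟨i, hi⟩ : Fin t) (fun j _ hj => ?_)
            (fun h => absurd (Finset.mem_univ _) h)
          have : (i : ℕ) ≠ j := fun h => hj (Fin.ext h.symm)
          simp [Δstar, this]
        rw [Finset.sum_eq_single (⟨i, hi⟩ : Fin t)]
        · rw [if_pos rfl, e1, norm_mul, mul_pow]
          gcongr
          have h0 : 0 ≤ Sig i ⟨i, hi⟩ := by
            rw [hnn i ⟨i, hi⟩ rfl]; exact hSpos _
          simp only [Δstar, if_pos, Complex.norm_real, Real.norm_eq_abs]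
          rw [abs_le]
          constructor
          · linarith [le_max_left (Sig i ⟨i, hi⟩ - ε) 0]
          · have : max (Sig i ⟨i, hi⟩ - ε) 0 ≤ Sig i ⟨i, hi⟩ := max_le (by linarith) h0
            linarith
        · intro j _ hj
          exact if_neg fun h => hj (Fin.ext h.symm)
        · simp
      · have e1 : (Δstar *ᵥ v) i = 0 := by
          rw [mulVec_eq_sum_aux]
          refine Finset.sum_eq_zero (M := ℂ) (fun j _ => ?_)
          have : (i : ℕ) ≠ j := fun h => hi (h ▸ j.2)
          simp [Δstar, this]
        rw [e1]
        simp only [norm_zero, ne_eq, OfNat.ofNat_ne_zero, not_false_eq_true, zero_pow]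
        exact Finset.sum_nonneg fun j _ => by split_ifs <;> positivity
    refine (Finset.sum_le_sum fun i _ => key i).trans ?_
    rw [Finset.sum_comm, Finset.mul_sum]
    refine Finset.sum_le_sum fun j _ => ?_
    by_cases hj : (j : ℕ) < r
    · rw [Finset.sum_eq_single (⟨j, hj⟩ : Fin r)]
      · simp
      · intro i _ hi
        exact if_neg fun h => hi (Fin.ext h)
      · simp
    · rw [Finset.sum_eq_zero]
      · positivity
      · intro i _
        exact if_neg fun h : (i : ℕ) = j => hj (h ▸ i.2)
  refine ⟨specNorm_of_cb hε.le hcb, fun Δ hΔ => ?_⟩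
  have hΛ : Λ.PosSemidef := by
    refine PosSemidef.diagonal fun i => ?_
    rw [Pi.zero_apply]
    exact Complex.zero_le_real.mpr (hd i)
  have hpd : (1 + (SigC + Δ) * Λ * (SigC + Δ)ᴴ).PosDef :=
    PosDef.one.add_posSemidef (hΛ.mul_mul_conjTranspose_same _)
  have hpos := Complex.lt_def.mp hpd.det_pos
  refine ⟨hpos.1, hpos.2.symm, ?_⟩
  have hcomm : ∀ M : Matrix (Fin r) (Fin t) ℂ, (1 + M * Λ * Mᴴ).det = (1 + Λ * (Mᴴ * M)).det := by
    intro M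
    rw [Matrix.mul_assoc, det_one_add_mul_comm, Matrix.mul_assoc]
  rw [hcomm, hcomm]
  set μ : Fin t → ℝ := fun j => max (diagEntry Sig j - ε) 0 with hμ
  have hstar : (SigC + Δstar)ᴴ * (SigC + Δstar) = diagonal (fun j => ((μ j ^ 2 : ℝ) : ℂ)) := by
    have hent : ∀ i j, (SigC + Δstar) i j = if (i : ℕ) = j then (μ j : ℂ) else 0 := by
      intro i j
      by_cases h : (i : ℕ) = j
      · rw [Matrix.add_apply, if_pos h]
        simp only [SigC, Δstar, map_apply, if_pos h, hμ, hnn i j h]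
        push_cast
        ring
      · rw [Matrix.add_apply, if_neg h]
        simp only [SigC, Δstar, map_apply, if_neg h, hSdiag i j h]
        simp
    ext a b
    rw [mul_apply]
    simp only [conjTranspose_apply, hent, diagonal_apply]
    by_cases hab : a = b
    · subst hab
      rw [if_pos rfl]
      by_cases ha : (a : ℕ) < r
      · rw [Finset.sum_eq_single (⟨a, ha⟩ : Fin r)]
        · simp [sq]
        · intro i _ hi
          have : ¬ (i : ℕ) = a := fun h => hi (Fin.ext h)
          simp [this]
        · simp
      · have hz : μ a = 0 := by
          simp [hμ, diagEntry, ha, hε.le]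
        rw [hz]
        simp
    · rw [if_neg hab]
      refine Finset.sum_eq_zero fun i _ => ?_
      by_cases h1 : (i : ℕ) = a
      · have : ¬ (i : ℕ) = b := fun h => hab (Fin.ext (h1.symm.trans h))
        simp [this]
      · simp [h1]
  rw [hstar, det_expand, det_expand, Complex.re_sum, Complex.re_sum]
  refine Finset.sum_le_sum fun S _ => ?_
  rw [← Complex.ofReal_prod, Complex.re_ofReal_mul, Complex.re_ofReal_mul]
  refine mul_le_mul_of_nonneg_left ?_ (Finset.prod_nonneg fun i _ => hd i)
  have hl : ((diagonal (fun j => ((μ j ^ 2 : ℝ) : ℂ))).submatrix (Subtype.val : S → Fin t)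
      (Subtype.val : S → Fin t)).det = ((∏ j : S, μ j ^ 2 : ℝ) : ℂ) := by
    have : (diagonal (fun j => ((μ j ^ 2 : ℝ) : ℂ))).submatrix (Subtype.val : S → Fin t)
      (Subtype.val : S → Fin t) = diagonal (fun j : S => ((μ j ^ 2 : ℝ) : ℂ)) := by
      ext a b
      simp only [diagonal_apply, submatrix_apply, Subtype.ext_iff]
    rw [this, det_diagonal, Complex.ofReal_prod]
  rw [hl, Complex.ofReal_re, gram_sub]
  by_cases hS : ∀ j : S, ε < diagEntry Sig j
  · have hlt : ∀ j : S, (j : ℕ) < r := by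
      intro j
      by_contra hj
      have := hS j
      simp [diagEntry, hj] at this
      linarith
    let e : S → Fin r := fun j => ⟨j, hlt j⟩
    have he : e.Injective := by
      intro a b hab
      exact Subtype.ext (Fin.ext (Fin.mk.inj_iff.mp hab))
    have hsq := sq_bound hε (Δ.submatrix e (Subtype.val : S → Fin t))
      ((specNorm_cb hΔ).sub e he _ Subtype.val_injective) (fun j => diagEntry Sig j) hS
    have hG : ((SigC + Δ).submatrix id (Subtype.val : S → Fin t)).submatrix e id =
        diagonal (fun j : S => (diagEntry Sig j : ℂ)) + Δ.submatrix e (Subtype.val : S → Fin t) := by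
      ext a b
      by_cases hab : a = b
      · subst hab
        simp [SigC, e, hnn ⟨a, hlt a⟩ a rfl]
      · have : Sig (e a) b = 0 := hSdiag _ _ fun h => hab (Subtype.ext (Fin.ext h))
        simp [SigC, this, hab]
    have hp : 0 < ∏ j : S, (diagEntry Sig j - ε) :=
      Finset.prod_pos fun j _ => sub_pos.mpr (hS j)
    have hfin := det_gram_rows ((SigC + Δ).submatrix id (Subtype.val : S → Fin t)) e he
      (by rw [hG]; exact norm_pos_iff.mp (hp.trans_le hsq))
    refine le_trans ?_ hfin
    rw [hG, Finset.prod_pow]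
    have hm : ∏ j : S, μ j = ∏ j : S, (diagEntry Sig j - ε) :=
      Finset.prod_congr rfl fun j _ => max_eq_left (sub_pos.mpr (hS j)).le
    rw [hm]
    exact pow_le_pow_left₀ hp.le hsq 2
  · push Not at hS
    obtain ⟨j, hj⟩ := hS
    rw [Finset.prod_eq_zero (Finset.mem_univ j)]
    · exact (Complex.le_def.mp (posSemidef_conjTranspose_mul_self _).det_nonneg).1
    · have : μ j = 0 := max_eq_right (by linarith)
      rw [this]; simp
end

section
/- Let r, t be positive integers, Σ an r×t real rectangular diagonal matrix with nonnegative diagonal entries, ε > 0, and Δ a complex r×t matrix with spectral norm ‖Δ‖₂ ≤ ε. Set A := (Σ+Δ)ᴴ(Σ+Δ), a t×t positive semidefinite Hermitian matrix. Then for every subset S of {1,…,t}, the principal submatrix A(S) (keeping the rows and columns of A indexed by S) satisfies det[A(S)] ≥ ∏_{j∈S} max{ςⱼⱼ − ε, 0}², where ςⱼⱼ := 0 for min(r,t) < j ≤ t. -/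
open Matrix

open scoped ComplexOrder in
theorem det_gram_nonneg_aux {s : Type*} [Fintype s] [DecidableEq s] {m : ℕ}
    (B : Matrix (Fin m) s ℂ) : 0 ≤ (Bᴴ * B).det.re ∧ 0 = (Bᴴ * B).det.im :=
  Complex.nonneg_iff.1 (Matrix.posSemidef_conjTranspose_mul_self B).det_nonneg

/-- If all generalized eigenvalues of `X x = μ Y x` have modulus at least one then
`|det Y| ≤ |det X|`. -/
theorem norm_det_le_aux {n : Type*} [Fintype n] [DecidableEq n] (X Y : Matrix n n ℂ)
    (hY : IsUnit Y.det)
    (h : ∀ x : n → ℂ, x ≠ 0 → ∀ μ : ℂ, X *ᵥ x = μ • (Y *ᵥ x) → 1 ≤ ‖μ‖) :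
    ‖Y.det‖ ≤ ‖X.det‖ := by
  have hX : X = Y * (Y⁻¹ * X) := by
    rw [← Matrix.mul_assoc, Matrix.mul_nonsing_inv _ hY, Matrix.one_mul]
  set Z := Y⁻¹ * X with hZ
  have hroot : ∀ μ ∈ Z.charpoly.roots, 1 ≤ ‖μ‖ := by
    intro μ hμ
    have h1 : Z.charpoly.eval μ = 0 := (Polynomial.mem_roots'.1 hμ).2
    rw [Matrix.eval_charpoly] at h1
    obtain ⟨v, hv, hv2⟩ := Matrix.exists_mulVec_eq_zero_iff.2 h1
    apply h v hv μ
    rw [Matrix.sub_mulVec, sub_eq_zero] at hv2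
    rw [hX, ← Matrix.mulVec_mulVec, ← hv2, Matrix.scalar_apply, ← Matrix.smul_one_eq_diagonal,
      Matrix.smul_mulVec, Matrix.one_mulVec, Matrix.mulVec_smul]
  have hdet : 1 ≤ ‖Z.det‖ := by
    rw [Matrix.det_eq_prod_roots_charpoly]
    generalize Z.charpoly.roots = s at hroot
    induction s using Multiset.induction_on with
    | empty => simp
    | cons a s ih =>
      rw [Multiset.prod_cons, norm_mul]
      exact one_le_mul_of_one_le_of_one_le (hroot a (by simp))
        (ih fun μ hμ => hroot μ (by simp [hμ]))
  rw [hX, Matrix.det_mul, norm_mul]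
  exact le_mul_of_one_le_right (norm_nonneg _) hdet

theorem extend_norm_aux {s : Type*} [Fintype s] {m : ℕ} (f : s → Fin m)
    (hf : Function.Injective f) (x : s → ℂ) :
    ‖WithLp.toLp 2 (Function.extend f x 0)‖ ^ 2 = ∑ j, ‖x j‖ ^ 2 := by
  rw [EuclideanSpace.norm_sq_eq]
  symm
  apply Fintype.sum_of_injective f hf
  · intro i hi
    simp only [Set.mem_range, not_exists] at hi
    simp [Function.extend_apply' _ _ _ (by simpa using hi)]
  · intro i
    simp [hf.extend_apply]

theorem quad_aux {s : Type*} [Fintype s] {m n : ℕ} (f : s → Fin m) (g : s → Fin n)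
    (hf : Function.Injective f) (hg : Function.Injective g) (D : Matrix (Fin m) (Fin n) ℂ)
    (ε : ℝ) (hD : specNorm D ≤ ε) (x : s → ℂ) :
    ‖star x ⬝ᵥ (D.submatrix f g *ᵥ x)‖ ≤ ε * ∑ j, ‖x j‖ ^ 2 := by
  set u : EuclideanSpace ℂ (Fin m) := WithLp.toLp 2 (Function.extend f x 0) with hu
  set v : EuclideanSpace ℂ (Fin n) := WithLp.toLp 2 (Function.extend g x 0) with hv
  have h1 := extend_norm_aux f hf x
  have h2 := extend_norm_aux g hg x
  rw [← hu] at h1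
  rw [← hv] at h2
  have huv : ‖u‖ = ‖v‖ := by
    have := h1.trans h2.symm
    exact (pow_left_inj₀ (norm_nonneg _) (norm_nonneg _) two_ne_zero).1 this
  have h3 : star x ⬝ᵥ (D.submatrix f g *ᵥ x) = inner ℂ u (Matrix.toEuclideanLin D v) := by
    rw [EuclideanSpace.inner_eq_star_dotProduct, dotProduct_comm]
    simp only [dotProduct]
    apply Fintype.sum_of_injective f hf
    · intro i hi
      simp only [Set.mem_range, not_exists] at hi
      simp [hu, Function.extend_apply' _ _ _ (by simpa using hi)]
    · intro i
      simp only [hu, hv, Pi.star_apply, hf.extend_apply, Matrix.mulVec, dotProduct,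
        Matrix.submatrix_apply, Matrix.toLpLin_apply]
      congr 1
      apply Fintype.sum_of_injective g hg
      · intro i hi
        simp only [Set.mem_range, not_exists] at hi
        simp [Function.extend_apply' _ _ _ (by simpa using hi)]
      · intro i
        simp [hg.extend_apply]
  rw [h3]
  have h4 : ‖Matrix.toEuclideanLin D v‖ ≤ ε * ‖v‖ := by
    have := (LinearMap.toContinuousLinearMap (Matrix.toEuclideanLin D)).le_opNorm v
    refine le_trans this ?_
    exact mul_le_mul_of_nonneg_right hD (norm_nonneg _)
  calc _ ≤ ‖u‖ * ‖Matrix.toEuclideanLin D v‖ := norm_inner_le_norm _ _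
    _ ≤ ‖u‖ * (ε * ‖v‖) := by gcongr
    _ = _ := by rw [← h2, huv]; ring

theorem star_dot_self_aux {s : Type*} [Fintype s] (x : s → ℂ) :
    star x ⬝ᵥ x = ((∑ j, ‖x j‖ ^ 2 : ℝ) : ℂ) := by
  simp only [dotProduct, Pi.star_apply, Complex.ofReal_sum]
  refine Finset.sum_congr rfl fun i _ => ?_
  have := Complex.conj_mul' (x i)
  simpa using this

theorem accretive_aux {s : Type*} [Fintype s] [DecidableEq s] (d : s → ℝ) (ε : ℝ)
    (hd : ∀ j, ε < d j) (E : Matrix s s ℂ)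
    (hE : ∀ x : s → ℂ, ‖star x ⬝ᵥ (E *ᵥ x)‖ ≤ ε * ∑ j, ‖x j‖ ^ 2) :
    ∏ j, (d j - ε) ≤ ‖(Matrix.diagonal (fun j => (d j : ℂ)) + E).det‖ := by
  have key := norm_det_le_aux (Matrix.diagonal (fun j => (d j : ℂ)) + E)
    (Matrix.diagonal (fun j => ((d j - ε : ℝ) : ℂ))) ?_ ?_
  · refine le_trans (le_of_eq ?_) key
    rw [Matrix.det_diagonal, norm_prod]
    refine Finset.prod_congr rfl fun j _ => ?_
    rw [Complex.norm_real, Real.norm_of_nonneg (sub_nonneg.2 (hd j).le)]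
  · rw [Matrix.det_diagonal, isUnit_iff_ne_zero, Finset.prod_ne_zero_iff]
    intro j _
    exact_mod_cast (sub_pos.2 (hd j)).ne'
  · intro x hx μ hμ
    have hdiag : ∀ c : s → ℝ, star x ⬝ᵥ (Matrix.diagonal (fun j => (c j : ℂ)) *ᵥ x)
        = ((∑ j, c j * ‖x j‖ ^ 2 : ℝ) : ℂ) := by
      intro c
      simp only [dotProduct, Pi.star_apply, Complex.ofReal_sum, Matrix.mulVec_diagonal]
      refine Finset.sum_congr rfl fun i _ => ?_
      have := Complex.conj_mul' (x i)
      push_cast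
      rw [← this]
      simp only [RCLike.star_def]
      ring
    have h1 := congrArg (fun y => (star x ⬝ᵥ y).re) hμ
    simp only [Matrix.add_mulVec, dotProduct_add, dotProduct_smul, hdiag, smul_eq_mul,
      Complex.add_re, Complex.ofReal_re, Complex.re_mul_ofReal] at h1
    have h2 := (abs_le.1 ((Complex.abs_re_le_norm _).trans (hE x))).1
    have h3 : 0 < ∑ j, (d j - ε) * ‖x j‖ ^ 2 := by
      obtain ⟨j, hj⟩ := Function.ne_iff.1 hx
      apply Finset.sum_pos'
      · intro i _
        exact mul_nonneg (sub_nonneg.2 (hd i).le) (by positivity)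
      · exact ⟨j, Finset.mem_univ _, mul_pos (sub_pos.2 (hd j))
          (pow_pos (norm_pos_iff.2 hj) 2)⟩
    have h4 : ∑ j, (d j - ε) * ‖x j‖ ^ 2 = ∑ j, d j * ‖x j‖ ^ 2 - ε * ∑ j, ‖x j‖ ^ 2 := by
      rw [Finset.mul_sum, ← Finset.sum_sub_distrib]
      exact Finset.sum_congr rfl fun i _ => by ring
    have h5 : 1 ≤ μ.re := by
      by_contra hcon
      push Not at hcon
      have := mul_lt_mul_of_pos_right hcon h3
      linarith
    exact h5.trans (Complex.re_le_norm μ)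

theorem gram_aux {s : Type*} [Fintype s] [DecidableEq s] {m : ℕ} (B : Matrix (Fin m) s ℂ)
    (f : s → Fin m) (hf : Function.Injective f) :
    ‖(B.submatrix f id).det‖ ^ 2 ≤ ‖(Bᴴ * B).det‖ := by
  set P := B.submatrix f id with hP
  by_cases h0 : P.det = 0
  · simp [h0]
  have hdet : ‖(Pᴴ * P).det‖ = ‖P.det‖ ^ 2 := by
    rw [Matrix.det_mul, Matrix.det_conjTranspose, norm_mul, norm_star, sq]
  rw [← hdet]
  have hgram : ∀ (x : s → ℂ),
      star x ⬝ᵥ ((Pᴴ * P) *ᵥ x) = ((∑ j, ‖(P *ᵥ x) j‖ ^ 2 : ℝ) : ℂ) := by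
    intro x
    rw [← star_dot_self_aux, ← Matrix.mulVec_mulVec, Matrix.dotProduct_mulVec,
      Matrix.vecMul_conjTranspose, star_star]
  have hgramB : ∀ (x : s → ℂ),
      star x ⬝ᵥ ((Bᴴ * B) *ᵥ x) = ((∑ j, ‖(B *ᵥ x) j‖ ^ 2 : ℝ) : ℂ) := by
    intro x
    rw [← star_dot_self_aux, ← Matrix.mulVec_mulVec, Matrix.dotProduct_mulVec,
      Matrix.vecMul_conjTranspose, star_star]
  apply norm_det_le_aux
  · rw [Matrix.det_mul, Matrix.det_conjTranspose, isUnit_iff_ne_zero]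
    exact mul_ne_zero (star_ne_zero.2 h0) h0
  · intro x hx μ hμ
    have h1 := congrArg (fun y => (star x ⬝ᵥ y).re) hμ
    simp only [dotProduct_smul, hgramB, hgram, smul_eq_mul,
      Complex.ofReal_re, Complex.re_mul_ofReal] at h1
    have h3 : 0 < ∑ j, ‖(P *ᵥ x) j‖ ^ 2 := by
      have hne : P *ᵥ x ≠ 0 := fun h =>
        h0 (Matrix.exists_mulVec_eq_zero_iff.1 ⟨x, hx, h⟩)
      obtain ⟨j, hj⟩ := Function.ne_iff.1 hne
      apply Finset.sum_pos'
      · intro i _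
        positivity
      · exact ⟨j, Finset.mem_univ _, pow_pos (norm_pos_iff.2 hj) 2⟩
    have h4 : ∑ j, ‖(P *ᵥ x) j‖ ^ 2 ≤ ∑ j, ‖(B *ᵥ x) j‖ ^ 2 := by
      have : ∑ j, ‖(P *ᵥ x) j‖ ^ 2 = ∑ i ∈ Finset.univ.map ⟨f, hf⟩, ‖(B *ᵥ x) i‖ ^ 2 := by
        rw [Finset.sum_map]
        rfl
      rw [this]
      exact Finset.sum_le_sum_of_subset_of_nonneg (Finset.subset_univ _)
        fun i _ _ => by positivity
    have h5 : 1 ≤ μ.re := by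
      by_contra hcon
      push Not at hcon
      have := mul_lt_mul_of_pos_right hcon h3
      linarith
    exact h5.trans (Complex.re_le_norm μ)

theorem stmt5 (r t : ℕ) (hr : 0 < r) (ht : 0 < t)
    (Sig : Matrix (Fin r) (Fin t) ℝ)
    (hSdiag : ∀ (i : Fin r) (j : Fin t), (i : ℕ) ≠ (j : ℕ) → Sig i j = 0)
    (hSpos : ∀ j, 0 ≤ diagEntry Sig j)
    (ε : ℝ) (hε : 0 < ε)
    (Δ : Matrix (Fin r) (Fin t) ℂ) (hΔ : specNorm Δ ≤ ε)
    (S : Finset (Fin t)) :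
    let A : Matrix (Fin t) (Fin t) ℂ :=
      (Sig.map Complex.ofReal + Δ)ᴴ * (Sig.map Complex.ofReal + Δ)
    -- A(S): the principal submatrix keeping rows and columns indexed by S
    let AS : Matrix S S ℂ := Matrix.submatrix A (fun i : S => i.1) (fun j : S => j.1)
    ((AS.det).im = 0) ∧
    (∏ j ∈ S, max (diagEntry Sig j - ε) 0 ^ 2) ≤ (AS.det).re := by
  intro A AS
  set B : Matrix (Fin r) S ℂ :=
    (Sig.map Complex.ofReal + Δ).submatrix id (fun j : S => j.1) with hB
  have hAS : AS = Bᴴ * B := rfl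
  obtain ⟨hre, him⟩ := det_gram_nonneg_aux B
  rw [← hAS] at hre him
  refine ⟨him.symm, ?_⟩
  by_cases hall : ∀ j ∈ S, ε < diagEntry Sig j
  · have hlt : ∀ j : S, (j.1 : ℕ) < r := by
      intro j
      by_contra hcon
      have := hall j.1 j.2
      rw [diagEntry, dif_neg (fun h => hcon h.1)] at this
      linarith
    let f : S → Fin r := fun j => ⟨j.1, hlt j⟩
    have hf : Function.Injective f := by
      intro a b hab
      have := congrArg Fin.val hab
      exact Subtype.ext (Fin.ext this)
    have hg : Function.Injective (fun j : S => j.1) := Subtype.val_injective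
    have hP : B.submatrix f id = Matrix.diagonal (fun j : S => (diagEntry Sig j.1 : ℂ))
        + Δ.submatrix f (fun j : S => j.1) := by
      ext i j
      simp only [hB, Matrix.submatrix_apply, Matrix.add_apply, Matrix.map_apply, id,
        Matrix.diagonal_apply]
      congr 1
      split_ifs with hij
      · subst hij
        rw [diagEntry, dif_pos ⟨hlt i, i.1.2⟩]
      · rw [hSdiag, Complex.ofReal_zero]
        intro h
        exact hij (Subtype.ext (Fin.ext h))
    have h1 := accretive_aux (fun j : S => diagEntry Sig j.1) ε (fun j => hall j.1 j.2)
      (Δ.submatrix f (fun j : S => j.1)) (quad_aux f _ hf hg Δ ε hΔ)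
    rw [← hP] at h1
    have h2 := gram_aux B f hf
    rw [← hAS] at h2
    have h3 : ‖AS.det‖ = AS.det.re := by
      have : AS.det = (AS.det.re : ℂ) := Complex.ext rfl (by simp [← him])
      rw [this, Complex.norm_real, Real.norm_of_nonneg hre, Complex.ofReal_re]
    have h4 : ∏ j ∈ S, max (diagEntry Sig j - ε) 0 ^ 2
        = (∏ j : S, (diagEntry Sig j.1 - ε)) ^ 2 := by
      rw [← Finset.prod_coe_sort S, ← Finset.prod_pow]
      refine Finset.prod_congr rfl fun j _ => ?_
      rw [max_eq_left (sub_nonneg.2 (hall j.1 j.2).le)]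
    rw [h4, ← h3]
    refine le_trans ?_ h2
    refine pow_le_pow_left₀ (Finset.prod_nonneg fun j _ => ?_) h1 2
    exact sub_nonneg.2 (hall j.1 j.2).le
  · push Not at hall
    obtain ⟨j, hj, hle⟩ := hall
    rw [Finset.prod_eq_zero hj]
    · exact hre
    · rw [max_eq_right (sub_nonpos.2 hle)]
      norm_num
end
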